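/- In the finite-dimensional design setup, assume m ≥ 2, let ℓ_m be the m-th row of O and let O₋ be the matrix of the first m−1 rows of O. Then Φ(O) − Φ(O₋) = (1/2) * Real.log ( 1 + N / D ), where N := ⟪F * Γpost(O₋) * Fᵀ applied to (O₋ᵀ * Σ(O₋)⁻¹ * O₋ * Γ' − 1) ℓ_m , (O₋ᵀ * Σ(O₋)⁻¹ * O₋ * Γ' − 1) ℓ_m⟫ (Euclidean inner product on ℝ^p) and D := σ² + ℓ_mᵀ Γ' ℓ_m − ℓ_mᵀ Γ' O₋ᵀ Σ(O₋)⁻¹ O₋ Γ' ℓ_m. -/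

import Mathlib

open Matrix

/-- Noise covariance `Σ(O) = O Γ' Oᵀ + σ² I` of the design `O`. -/
noncomputable def SigM {m p : ℕ} (Γ' : Matrix (Fin p) (Fin p) ℝ) (σ : ℝ)
    (O : Matrix (Fin m) (Fin p) ℝ) : Matrix (Fin m) (Fin m) ℝ :=
  O * Γ' * Oᵀ + σ ^ 2 • 1

/-- Posterior covariance `Γpost(O) = (Γ⁻¹ + Fᵀ Oᵀ Σ(O)⁻¹ O F)⁻¹`. -/
noncomputable def Gpost {n m p : ℕ} (Γ : Matrix (Fin n) (Fin n) ℝ)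
    (F : Matrix (Fin p) (Fin n) ℝ) (Γ' : Matrix (Fin p) (Fin p) ℝ) (σ : ℝ)
    (O : Matrix (Fin m) (Fin p) ℝ) : Matrix (Fin n) (Fin n) ℝ :=
  (Γ⁻¹ + Fᵀ * Oᵀ * (SigM Γ' σ O)⁻¹ * O * F)⁻¹

/-- The D-optimal design objective
`Φ(O) = ½ log det (I + Γ^{1/2} Fᵀ Oᵀ Σ(O)⁻¹ O F Γ^{1/2})`. -/
noncomputable def Phi {n m p : ℕ} (Γhalf : Matrix (Fin n) (Fin n) ℝ)
    (F : Matrix (Fin p) (Fin n) ℝ) (Γ' : Matrix (Fin p) (Fin p) ℝ) (σ : ℝ)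
    (O : Matrix (Fin m) (Fin p) ℝ) : ℝ :=
  (1 / 2) * Real.log (Matrix.det (1 + Γhalf * Fᵀ * Oᵀ * (SigM Γ' σ O)⁻¹ * O * F * Γhalf))

lemma aux_sig {m p : ℕ} (G : Matrix (Fin p) (Fin p) ℝ) (hG : G.PosSemidef) (σ : ℝ) (hσ : 0 < σ)
    (O : Matrix (Fin m) (Fin p) ℝ) : (SigM G σ O).PosDef := by
  unfold SigM
  have h1 : (O * G * Oᵀ).PosSemidef := by
    simpa using hG.mul_mul_conjTranspose_same O
  have h2 : ((σ ^ 2) • (1 : Matrix (Fin m) (Fin m) ℝ)).PosDef :=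
    Matrix.PosDef.one.smul (by positivity)
  exact Matrix.PosDef.posSemidef_add h1 h2

lemma aux_psd {m p : ℕ} (G : Matrix (Fin p) (Fin p) ℝ) (hG : G.PosSemidef) (σ : ℝ) (hσ : 0 < σ)
    (O : Matrix (Fin m) (Fin p) ℝ) : (Oᵀ * (SigM G σ O)⁻¹ * O).PosSemidef := by
  simpa using (aux_sig G hG σ hσ O).inv.posSemidef.conjTranspose_mul_mul_same O

lemma aux_push {m p : ℕ} (G : Matrix (Fin p) (Fin p) ℝ) (hG : G.PosSemidef) (σ : ℝ) (hσ : 0 < σ)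
    (O : Matrix (Fin m) (Fin p) ℝ) :
    (Oᵀ * O * G + σ ^ 2 • 1) * (Oᵀ * (SigM G σ O)⁻¹ * O) = Oᵀ * O := by
  have hu : IsUnit (SigM G σ O).det :=
    (Matrix.isUnit_iff_isUnit_det _).1 (aux_sig G hG σ hσ O).isUnit
  have h : (Oᵀ * O * G + σ ^ 2 • 1) * Oᵀ = Oᵀ * SigM G σ O := by
    simp [SigM, Matrix.add_mul, Matrix.mul_add, Matrix.mul_assoc]
  calc _ = ((Oᵀ * O * G + σ ^ 2 • 1) * Oᵀ) * (SigM G σ O)⁻¹ * O := by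
        simp only [Matrix.mul_assoc]
    _ = _ := by rw [h, Matrix.mul_assoc Oᵀ, Matrix.mul_nonsing_inv _ hu, Matrix.mul_one]

lemma aux_unit {m p : ℕ} (G : Matrix (Fin p) (Fin p) ℝ) (hG : G.PosSemidef) (σ : ℝ) (hσ : 0 < σ)
    (O : Matrix (Fin m) (Fin p) ℝ) :
    IsUnit (Oᵀ * O * G + σ ^ 2 • 1) := by
  have h := aux_push G hG σ hσ O
  have hs : σ ^ 2 ≠ 0 := by positivity
  apply IsUnit.of_mul_eq_one ((σ ^ 2)⁻¹ • (1 - Oᵀ * (SigM G σ O)⁻¹ * O * G))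
  rw [Matrix.mul_smul, Matrix.mul_sub, ← Matrix.mul_assoc _ _ G, h, Matrix.mul_one,
    add_sub_cancel_left, smul_smul, inv_mul_cancel₀ hs, one_smul]

lemma aux_rank {p : ℕ} (A A' B G Q : Matrix (Fin p) (Fin p) ℝ) (l x : Fin p → ℝ) (s : ℝ)
    (hs : s ≠ 0) (hA : Aᵀ = A) (hG : Gᵀ = G)
    (hPA : (B * G + s • 1) * A = B)
    (hQ : Q = (B * G + s • 1) + vecMulVec l l * G)
    (hQA : Q * A' = B + vecMulVec l l) (hQu : IsUnit Q)
    (hx : x = (A * G - 1) *ᵥ l) :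
    s - l ⬝ᵥ G *ᵥ x ≠ 0 ∧ A' = A + (s - l ⬝ᵥ G *ᵥ x)⁻¹ • vecMulVec x x := by
  have hPx : (B * G + s • 1) *ᵥ x = -(s • l) := by
    rw [hx, mulVec_mulVec, Matrix.mul_sub, ← Matrix.mul_assoc, hPA]
    rw [Matrix.mul_one, sub_add_cancel_left, Matrix.neg_mulVec, Matrix.smul_mulVec,
      Matrix.one_mulVec]
  have hQx : Q *ᵥ x = -((s - l ⬝ᵥ G *ᵥ x) • l) := by
    rw [hQ, Matrix.add_mulVec, hPx, ← mulVec_mulVec, vecMulVec_mulVec]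
    simp only [op_smul_eq_smul]
    module
  have hD : s - l ⬝ᵥ G *ᵥ x ≠ 0 := by
    intro h0
    have : x = 0 := by
      apply Matrix.mulVec_injective_of_isUnit hQu
      rw [hQx, h0]; simp
    rw [this] at h0
    simp at h0
    exact hs h0
  refine ⟨hD, hQu.mul_left_cancel ?_⟩
  have hxt : l ᵥ* (G * A) = x + l := by
    rw [← mulVec_transpose, transpose_mul, hA, hG, hx, Matrix.sub_mulVec]; simp
  rw [hQA, Matrix.mul_add, Matrix.mul_smul, mul_vecMulVec, hQx, neg_vecMulVec, smul_vecMulVec,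
    smul_neg, smul_smul, inv_mul_cancel₀ hD, one_smul, hQ, Matrix.add_mul, hPA, Matrix.mul_assoc,
    vecMulVec_mul, hxt, vecMulVec_add]
  abel

lemma aux_det {n p : ℕ} (H Γ : Matrix (Fin n) (Fin n) ℝ) (hH : IsUnit H) (hsq : H * H = Γ)
    (F : Matrix (Fin p) (Fin n) ℝ) (A A' : Matrix (Fin p) (Fin p) ℝ) (x : Fin p → ℝ) (d : ℝ)
    (hHt : Hᵀ = H)
    (hA' : A' = A + d⁻¹ • vecMulVec x x)
    (hM : IsUnit (1 + H * Fᵀ * A * F * H).det) :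
    (1 + H * Fᵀ * A' * F * H).det = (1 + H * Fᵀ * A * F * H).det *
      (1 + ((F * (Γ⁻¹ + Fᵀ * A * F)⁻¹ * Fᵀ) *ᵥ x ⬝ᵥ x) / d) := by
  have hHd := (Matrix.isUnit_iff_isUnit_det _).1 hH
  have h1 : (1 + H * Fᵀ * A * F * H) = H * (Γ⁻¹ + Fᵀ * A * F) * H := by
    rw [← hsq, Matrix.mul_inv_rev, Matrix.mul_add, Matrix.mul_nonsing_inv_cancel_left _ _ hHd,
      Matrix.add_mul, Matrix.nonsing_inv_mul _ hHd]
    simp only [Matrix.mul_assoc]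
  have h2 : H * (1 + H * Fᵀ * A * F * H)⁻¹ * H = (Γ⁻¹ + Fᵀ * A * F)⁻¹ := by
    rw [h1, Matrix.mul_inv_rev, Matrix.mul_inv_rev, Matrix.mul_nonsing_inv_cancel_left _ _ hHd,
      Matrix.mul_assoc, Matrix.nonsing_inv_mul _ hHd, Matrix.mul_one]
  have h3 : 1 + H * Fᵀ * A' * F * H = (1 + H * Fᵀ * A * F * H) +
      replicateCol Unit (d⁻¹ • (H * Fᵀ) *ᵥ x) * replicateRow Unit ((H * Fᵀ) *ᵥ x) := by
    rw [← vecMulVec_eq, hA', Matrix.mul_add, Matrix.add_mul, Matrix.add_mul, ← add_assoc]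
    congr 1
    rw [Matrix.mul_smul, mul_vecMulVec, Matrix.smul_mul, Matrix.smul_mul, vecMulVec_mul,
      vecMulVec_mul, smul_vecMulVec, vecMul_vecMul, ← mulVec_transpose, transpose_mul, hHt]
  rw [h3, det_add_replicateCol_mul_replicateRow hM, ← h2]
  congr 1
  rw [Matrix.det_unique, Matrix.add_apply, Matrix.one_apply_eq]
  congr 1
  generalize (1 + H * Fᵀ * A * F * H)⁻¹ = K
  have h4 : (replicateRow Unit ((H * Fᵀ) *ᵥ x) * K * replicateCol Unit (d⁻¹ • (H * Fᵀ) *ᵥ x))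
      default default = ((H * Fᵀ) *ᵥ x) ⬝ᵥ K *ᵥ (d⁻¹ • (H * Fᵀ) *ᵥ x) := by
    rw [Matrix.mul_assoc]
    rfl
  have h5 : (F * (H * K * H) * Fᵀ) = (H * Fᵀ)ᵀ * (K * (H * Fᵀ)) := by
    rw [transpose_mul, transpose_transpose, hHt]; simp only [Matrix.mul_assoc]
  have h6 : ((H * Fᵀ)ᵀ * (K * (H * Fᵀ))) *ᵥ x ⬝ᵥ x =
      ((H * Fᵀ) *ᵥ x) ⬝ᵥ K *ᵥ ((H * Fᵀ) *ᵥ x) := by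
    rw [← mulVec_mulVec, ← mulVec_mulVec, mulVec_transpose, ← dotProduct_mulVec, dotProduct_comm]
  rw [h4, h5, h6, mulVec_smul, dotProduct_smul, smul_eq_mul, div_eq_inv_mul]

/-- Increase in the design objective due to the last measurement (`m+1` rows in total,
`O₋` the first `m` rows, `ℓ` the last row). -/
theorem design_increase_due_to_measurement
    (n p m : ℕ) (hn : 0 < n) (hp : 0 < p) (hm : 1 ≤ m)
    (Γ Γhalf : Matrix (Fin n) (Fin n) ℝ) (hΓ : Γ.PosDef) (hΓhalf : Γhalf.PosDef)
    (hsq : Γhalf * Γhalf = Γ)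
    (F : Matrix (Fin p) (Fin n) ℝ)
    (Γ' : Matrix (Fin p) (Fin p) ℝ) (hΓ' : Γ'.PosSemidef)
    (σ : ℝ) (hσ : 0 < σ)
    (O : Matrix (Fin (m + 1)) (Fin p) ℝ)
    (Om : Matrix (Fin m) (Fin p) ℝ) (hOm : Om = O.submatrix Fin.castSucc id)
    (ℓ : Fin p → ℝ) (hℓ : ℓ = O (Fin.last m))
    (x : Fin p → ℝ) (hx : x = (Omᵀ * (SigM Γ' σ Om)⁻¹ * Om * Γ' - 1).mulVec ℓ) :
    Phi Γhalf F Γ' σ O - Phi Γhalf F Γ' σ Om =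
      (1 / 2) * Real.log (1 +
        ((F * Gpost Γ F Γ' σ Om * Fᵀ).mulVec x ⬝ᵥ x) /
        (σ ^ 2 + ℓ ⬝ᵥ Γ'.mulVec ℓ -
          ℓ ⬝ᵥ (Γ' * Omᵀ * (SigM Γ' σ Om)⁻¹ * Om * Γ').mulVec ℓ)) := by
  have hs : σ ^ 2 ≠ 0 := by positivity
  have hpd : ∀ {k : ℕ} (O : Matrix (Fin k) (Fin p) ℝ),
      (1 + Γhalf * Fᵀ * (Oᵀ * (SigM Γ' σ O)⁻¹ * O) * F * Γhalf).PosDef := by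
    intro k O
    apply Matrix.PosDef.one.add_posSemidef
    have := (aux_psd Γ' hΓ' σ hσ O).conjTranspose_mul_mul_same (F * Γhalf)
    rw [conjTranspose_mul, hΓhalf.isHermitian.eq, conjTranspose_eq_transpose_of_trivial] at this
    simpa only [Matrix.mul_assoc] using this
  have hHt : Γhalfᵀ = Γhalf := by
    rw [← conjTranspose_eq_transpose_of_trivial]; exact hΓhalf.isHermitian.eq
  have hGt : Γ'ᵀ = Γ' := by
    rw [← conjTranspose_eq_transpose_of_trivial]; exact hΓ'.isHermitian.eq
  have hAt : (Omᵀ * (SigM Γ' σ Om)⁻¹ * Om)ᵀ = Omᵀ * (SigM Γ' σ Om)⁻¹ * Om := by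
    rw [← conjTranspose_eq_transpose_of_trivial]; exact (aux_psd Γ' hΓ' σ hσ Om).isHermitian.eq
  have hB : Oᵀ * O = Omᵀ * Om + vecMulVec ℓ ℓ := by
    ext i j
    simp [Matrix.mul_apply, Fin.sum_univ_castSucc, vecMulVec_apply, hOm, hℓ]
  obtain ⟨hD, hA'⟩ := aux_rank (Omᵀ * (SigM Γ' σ Om)⁻¹ * Om) (Oᵀ * (SigM Γ' σ O)⁻¹ * O)
    (Omᵀ * Om) Γ' (Oᵀ * O * Γ' + σ ^ 2 • 1) ℓ x (σ ^ 2) hs hAt hGt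
    (aux_push Γ' hΓ' σ hσ Om) (by rw [hB, Matrix.add_mul]; abel)
    (by rw [aux_push Γ' hΓ' σ hσ O, hB]) (aux_unit Γ' hΓ' σ hσ O) hx
  have hDe : σ ^ 2 + ℓ ⬝ᵥ Γ'.mulVec ℓ -
          ℓ ⬝ᵥ (Γ' * Omᵀ * (SigM Γ' σ Om)⁻¹ * Om * Γ').mulVec ℓ = σ ^ 2 - ℓ ⬝ᵥ Γ' *ᵥ x := by
    rw [hx, mulVec_mulVec, Matrix.mul_sub, Matrix.sub_mulVec, dotProduct_sub, Matrix.mul_one]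
    simp only [Matrix.mul_assoc]
    ring
  have hd := aux_det Γhalf Γ hΓhalf.isUnit hsq F _ _ x _ hHt hA' (hpd Om).det_pos.ne'.isUnit
  have h1 := (hpd O).det_pos
  have h2 := (hpd Om).det_pos
  rw [hDe]
  have e1 : Phi Γhalf F Γ' σ O = (1 / 2) * Real.log
      (1 + Γhalf * Fᵀ * (Oᵀ * (SigM Γ' σ O)⁻¹ * O) * F * Γhalf).det := by
    simp only [Phi, Matrix.mul_assoc]
  have e2 : Phi Γhalf F Γ' σ Om = (1 / 2) * Real.log
      (1 + Γhalf * Fᵀ * (Omᵀ * (SigM Γ' σ Om)⁻¹ * Om) * F * Γhalf).det := by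
    simp only [Phi, Matrix.mul_assoc]
  have e3 : Gpost Γ F Γ' σ Om = (Γ⁻¹ + Fᵀ * (Omᵀ * (SigM Γ' σ Om)⁻¹ * Om) * F)⁻¹ := by
    simp only [Gpost, Matrix.mul_assoc]
  rw [hd] at h1
  rw [e1, e2, e3, hd, Real.log_mul h2.ne' (pos_of_mul_pos_right h1 h2.le).ne']
  ring
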